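/- arXiv:1403.5509 — 2 statements merged into one kernel-verified Lean document; each statement's English description precedes it below -/
import Mathlib

section
/- Let V be a finite-dimensional complex vector space and d a natural number. The centralizer in End_ℂ(V^{⊗d}) of the unital subalgebra B generated by the diagonal operators Σ_{i=1}^d a^{(i)} (a ∈ End_ℂ(V)) equals the subalgebra A spanned by the permutation operators of S_d; that is, {T ∈ End_ℂ(V^{⊗d}) : T·S = S·T for all S ∈ B} = A. -/
open scoped TensorProduct

noncomputable section

/-- The permutation operator on `V^{⊗d}` induced by `σ ∈ S_d`:
`σ · (v₁ ⊗ ⋯ ⊗ v_d) = v_{σ⁻¹(1)} ⊗ ⋯ ⊗ v_{σ⁻¹(d)}`. -/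
def permOp (V : Type) [AddCommGroup V] [Module ℂ V] (d : ℕ) (σ : Equiv.Perm (Fin d)) :
    Module.End ℂ (⨂[ℂ] _ : Fin d, V) :=
  (PiTensorProduct.reindex ℂ (fun _ : Fin d => V) σ).toLinearMap

/-- The operator `a^{(i)}` acting by `a` in the `i`-th tensor factor and by the identity
elsewhere. -/
def slotOp (V : Type) [AddCommGroup V] [Module ℂ V] (d : ℕ) (i : Fin d)
    (a : Module.End ℂ V) : Module.End ℂ (⨂[ℂ] _ : Fin d, V) :=
  PiTensorProduct.map (Function.update (fun _ : Fin d => (LinearMap.id : V →ₗ[ℂ] V)) i a)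

/-- The diagonal operator `Σ_{i=1}^d a^{(i)}` on `V^{⊗d}`. -/
def diagOp (V : Type) [AddCommGroup V] [Module ℂ V] (d : ℕ) (a : Module.End ℂ V) :
    Module.End ℂ (⨂[ℂ] _ : Fin d, V) :=
  ∑ i : Fin d, slotOp V d i a

/-- Double centralizer theorem for a finite group: an operator commuting with every intertwiner of
a representation lies in the linear span of the group operators. -/
theorem mem_span_range_of_commute_intertwiners {k G E : Type*} [Field k] [Group G] [Fintype G]
    [NeZero (Fintype.card G : k)] [AddCommGroup E] [Module k E] [FiniteDimensional k E]
    (ρ : Representation k G E) (T : Module.End k E)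
    (hT : ∀ X : Module.End k E, (∀ g, X * ρ g = ρ g * X) → T * X = X * T) :
    T ∈ Submodule.span k (Set.range ρ) := by
  set A : Submodule k (Module.End k E) := Submodule.span k (Set.range ρ)
  have hmul : ∀ g, ∀ X ∈ A, ρ g * X ∈ A := by
    intro g X hX
    induction hX using Submodule.span_induction with
    | mem x hx =>
      obtain ⟨h, rfl⟩ := hx
      rw [← map_mul]
      exact Submodule.subset_span ⟨_, rfl⟩
    | zero => simp
    | add x y _ _ hx hy => rw [mul_add]; exact A.add_mem hx hy
    | smul c x _ hx => rw [mul_smul_comm]; exact A.smul_mem c hx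
  obtain ⟨π, hπ⟩ := A.subtype.exists_leftInverse_of_injective A.ker_subtype
  let q : Module.End k E →ₗ[k] Module.End k E :=
    ∑ g, LinearMap.mulLeft k (ρ g) ∘ₗ A.subtype ∘ₗ π ∘ₗ LinearMap.mulLeft k (ρ g⁻¹)
  have hq (X : Module.End k E) : q X = ∑ g, ρ g * (π (ρ g⁻¹ * X) : Module.End k E) := by
    simp [q]
  have hq_mem (X : Module.End k E) : q X ∈ A := by
    rw [hq]
    exact A.sum_mem fun g _ => hmul _ _ (π _).2
  have hq_equivariant (g : G) (X : Module.End k E) : q (ρ g * X) = ρ g * q X := by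
    rw [hq, hq, Finset.mul_sum, ← Equiv.sum_comp (Equiv.mulLeft g)]
    refine Finset.sum_congr rfl fun h _ => ?_
    rw [Equiv.coe_mulLeft, ← mul_assoc, ← map_mul, ← mul_assoc, ← map_mul]
    congr 4
    group
  have hq_one : q 1 = (Fintype.card G : k) • 1 := by
    have hterm (g : G) : ρ g * (π (ρ g⁻¹ * 1) : Module.End k E) = 1 := by
      have h := LinearMap.congr_fun hπ ⟨ρ g⁻¹, Submodule.subset_span ⟨_, rfl⟩⟩
      simp only [LinearMap.comp_apply, Submodule.subtype_apply, LinearMap.id_apply] at h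
      rw [mul_one, h, ← map_mul, mul_inv_cancel, map_one]
    rw [hq, Finset.sum_congr rfl fun g _ => hterm g]
    simp [Nat.cast_smul_eq_nsmul]
  have hq_rankOne (φ : Module.Dual k E) (w : E) :
      T * q (φ.smulRight w) = q (φ.smulRight (T w)) := by
    ext v
    let X : Module.End k E :=
      LinearMap.applyₗ v ∘ₗ q ∘ₗ (LinearMap.smulRightₗ (R := k) (M := E) (M₂ := E) φ)
    have hX (u : E) : X u = q (φ.smulRight u) v := rfl
    have hcomm := hT X fun g => by
      ext u
      have : φ.smulRight (ρ g u) = ρ g * φ.smulRight u := by ext; simp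
      rw [Module.End.mul_apply, Module.End.mul_apply, hX, hX, this, hq_equivariant,
        Module.End.mul_apply]
    exact LinearMap.congr_fun hcomm w
  have hq_T : T * q 1 = q T := by
    let b := Module.finBasis k E
    have hsum (S : Module.End k E) : S = ∑ i, (b.coord i).smulRight (S (b i)) := by
      refine b.ext fun j => ?_
      simp [LinearMap.sum_apply, Finsupp.single_apply]
    rw [hsum T, hsum 1, map_sum, map_sum, ← hsum T, Finset.mul_sum]
    exact Finset.sum_congr rfl fun i _ => hq_rankOne _ _
  rw [hq_one, mul_smul_comm, mul_one] at hq_T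
  exact (A.smul_mem_iff (NeZero.ne (Fintype.card G : k))).1 (hq_T ▸ hq_mem T)

/-- Endomorphisms of a tensor product are spanned by tensor products of endomorphisms. -/
theorem span_range_piTensorProduct_map {k ι V : Type*} [Field k] [Finite ι] [AddCommGroup V]
    [Module k V] [FiniteDimensional k V] :
    Submodule.span k (Set.range fun f : ι → Module.End k V =>
      (PiTensorProduct.map f : Module.End k (⨂[k] _ : ι, V))) = ⊤ := by
  classical
  have := Fintype.ofFinite ι
  let b := Module.finBasis k V
  let c := Basis.piTensorProduct (fun _ : ι => b)
  have hrank (J : ι → Fin (Module.finrank k V)) (w : ⨂[k] _ : ι, V) :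
      (c.coord J).smulRight w ∈ Submodule.span k (Set.range fun f : ι → Module.End k V =>
        (PiTensorProduct.map f : Module.End k (⨂[k] _ : ι, V))) := by
    induction w using PiTensorProduct.induction_on with
    | smul_tprod r w =>
      have : (c.coord J).smulRight (r • PiTensorProduct.tprod k w) =
          r • PiTensorProduct.map fun i => (b.coord (J i)).smulRight (w i) := by
        ext v
        simp [c, Basis.piTensorProduct_repr_tprod_apply, MultilinearMap.map_smul_univ, smul_smul,
          mul_comm]
      rw [this]
      exact Submodule.smul_mem _ _ (Submodule.subset_span ⟨_, rfl⟩)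
    | add x y hx hy =>
      have : (c.coord J).smulRight (x + y) =
          (c.coord J).smulRight x + (c.coord J).smulRight y := by ext; simp
      rw [this]
      exact Submodule.add_mem _ hx hy
  refine eq_top_iff.2 fun S _ => ?_
  have hsum : S = ∑ J, (c.coord J).smulRight (S (c J)) := by
    refine c.ext fun j => ?_
    simp [LinearMap.sum_apply, Finsupp.single_apply]
  rw [hsum]
  exact Submodule.sum_mem _ fun J _ => hrank _ _

section

variable (V : Type) [AddCommGroup V] [Module ℂ V] (d : ℕ)

/-- The permutation representation of `S_d` on `V^{⊗d}`. -/
def permRep : Representation ℂ (Equiv.Perm (Fin d)) (⨂[ℂ] _ : Fin d, V) where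
  toFun := permOp V d
  map_one' := by
    ext v
    simp only [permOp, LinearMap.compMultilinearMap_apply, LinearEquiv.coe_coe,
      PiTensorProduct.reindex_tprod]
    rfl
  map_mul' σ τ := by
    ext v
    simp only [permOp, LinearMap.compMultilinearMap_apply, LinearEquiv.coe_coe,
      Module.End.mul_apply, PiTensorProduct.reindex_tprod]
    rfl

variable {V d}

theorem permOp_mul_map (σ : Equiv.Perm (Fin d)) (f : Fin d → Module.End ℂ V) :
    permOp V d σ * PiTensorProduct.map f =
      PiTensorProduct.map (fun i => f (σ.symm i)) * permOp V d σ := by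
  ext v
  simp [permOp]

theorem permOp_mul_slotOp (σ : Equiv.Perm (Fin d)) (i : Fin d) (a : Module.End ℂ V) :
    permOp V d σ * slotOp V d i a = slotOp V d (σ i) a * permOp V d σ := by
  rw [slotOp, slotOp, permOp_mul_map]
  congr 2
  ext1 j
  simp only [Function.update_apply, Equiv.symm_apply_eq]

theorem permOp_mul_diagOp (σ : Equiv.Perm (Fin d)) (a : Module.End ℂ V) :
    permOp V d σ * diagOp V d a = diagOp V d a * permOp V d σ := by
  simp only [diagOp, Finset.mul_sum, Finset.sum_mul, permOp_mul_slotOp]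
  exact Equiv.sum_comp σ fun i => slotOp V d i a * permOp V d σ

theorem slotOp_mul_map (i : Fin d) (a : Module.End ℂ V) (f : Fin d → Module.End ℂ V) :
    slotOp V d i a * PiTensorProduct.map f =
      PiTensorProduct.map (Function.update f i (a * f i)) := by
  rw [slotOp, ← PiTensorProduct.map_mul]
  congr 1
  ext1 j
  rcases eq_or_ne j i with rfl | h
  · simp
  · simp only [Function.update_of_ne h]
    exact one_mul _

/-- The symmetrization `Σ_σ f_{σ(1)} ⊗ ⋯ ⊗ f_{σ(d)}`. -/
def symmMap (f : Fin d → Module.End ℂ V) : Module.End ℂ (⨂[ℂ] _ : Fin d, V) :=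
  ∑ σ : Equiv.Perm (Fin d), PiTensorProduct.map fun i => f (σ i)

theorem symmMap_comp_perm (f : Fin d → Module.End ℂ V) (τ : Equiv.Perm (Fin d)) :
    symmMap (fun i => f (τ i)) = symmMap f :=
  Equiv.sum_comp (Equiv.mulLeft τ)
    fun σ : Equiv.Perm (Fin d) => PiTensorProduct.map fun i => f (σ i)

theorem diagOp_mul_symmMap (a : Module.End ℂ V) (f : Fin d → Module.End ℂ V) :
    diagOp V d a * symmMap f = ∑ m, symmMap (Function.update f m (a * f m)) := by
  simp only [symmMap, Finset.mul_sum]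
  rw [Finset.sum_comm]
  refine Finset.sum_congr rfl fun σ _ => ?_
  rw [diagOp, Finset.sum_mul,
    ← Equiv.sum_comp σ fun m => PiTensorProduct.map fun i => Function.update f m (a * f m) (σ i)]
  refine Finset.sum_congr rfl fun i _ => ?_
  rw [slotOp_mul_map]
  congr 1
  ext1 j
  simp only [Function.update_apply, σ.injective.eq_iff]

/-- Symmetrized tensor products of endomorphisms are generated by the diagonal operators. -/
theorem symmMap_mem_adjoin_diagOp (f : Fin d → Module.End ℂ V) :
    symmMap f ∈ Algebra.adjoin ℂ {S | ∃ a : Module.End ℂ V, S = diagOp V d a} := by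
  classical
  set B := Algebra.adjoin ℂ {S | ∃ a : Module.End ℂ V, S = diagOp V d a}
  induction hn : (Finset.univ.filter fun i => f i ≠ 1).card using Nat.strong_induction_on
    generalizing f with
  | _ n ih =>
  by_cases hf : ∀ i, f i = 1
  · have : symmMap f = ∑ σ : Equiv.Perm (Fin d), 1 := by
      simp only [symmMap, hf]
      exact Finset.sum_congr rfl fun _ _ => PiTensorProduct.map_one
    rw [this]
    exact B.sum_mem fun _ _ => B.one_mem
  push Not at hf
  obtain ⟨i, hi⟩ := hf
  set f' := Function.update f i 1 with hf'
  have hlt (g : Fin d → Module.End ℂ V) (hgi : g i = 1) (hg : ∀ j, f j = 1 → g j = 1) :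
      symmMap g ∈ B := by
    refine ih _ ?_ g rfl
    rw [← hn]
    refine Finset.card_lt_card (Finset.ssubset_iff_of_subset ?_ |>.2 ⟨i, ?_, ?_⟩)
    · intro j
      simpa using fun h h' => h (hg j h')
    · simpa using hi
    · simpa using hgi
  have hf'_mem : symmMap f' ∈ B :=
    hlt f' (by simp [hf']) fun j hj => by simp [hf', Function.update_apply, hj]
  have hsame (m : Fin d) (hm : f' m = 1) :
      symmMap (Function.update f' m (f i * f' m)) = symmMap f := by
    rw [← symmMap_comp_perm _ (Equiv.swap i m)]
    congr 1
    ext1 j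
    rcases eq_or_ne j i with rfl | hji
    · simp [hm]
    rcases eq_or_ne j m with rfl | hjm
    · have : f j = 1 := by simpa [hf', hji] using hm
      simp [this, Function.update_apply, hf', Ne.symm hji]
    · simp [Equiv.swap_apply_of_ne_of_ne hji hjm, Function.update_of_ne hjm, hf',
        Function.update_of_ne hji]
  have hother (m : Fin d) (hm : f' m ≠ 1) :
      symmMap (Function.update f' m (f i * f' m)) ∈ B := by
    have hmi : m ≠ i := by rintro rfl; simp [hf'] at hm
    have hfm : f m ≠ 1 := by simpa [hf', hmi] using hm
    refine hlt _ (by simp [hf', hmi.symm]) fun j hj => ?_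
    have hjm : j ≠ m := by rintro rfl; exact hfm hj
    simp [hf', Function.update_apply, hjm, hj]
  have hprod : diagOp V d (f i) * symmMap f' ∈ B :=
    B.mul_mem (Algebra.subset_adjoin ⟨_, rfl⟩) hf'_mem
  rw [diagOp_mul_symmMap, ← Finset.sum_filter_add_sum_filter_not _ fun m => f' m = 1,
    Finset.sum_congr rfl fun m hm => hsame m (Finset.mem_filter.1 hm).2, Finset.sum_const,
    ← Nat.cast_smul_eq_nsmul ℂ] at hprod
  have hrest : ∑ m with ¬ f' m = 1, symmMap (Function.update f' m (f i * f' m)) ∈ B :=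
    B.sum_mem fun m hm => hother m (Finset.mem_filter.1 hm).2
  have hcard : ((Finset.univ.filter fun m => f' m = 1).card : ℂ) ≠ 0 :=
    Nat.cast_ne_zero.2 (Finset.card_ne_zero_of_mem (Finset.mem_filter.2
      ⟨Finset.mem_univ i, by simp [hf']⟩))
  have hsmul := (B.toSubmodule.add_mem_iff_left hrest).1 hprod
  exact (B.toSubmodule.smul_mem_iff hcard).1 hsmul

/-- Every operator commuting with the permutation operators is generated by the diagonal
operators. -/
theorem mem_adjoin_diagOp_of_commute_permOp [FiniteDimensional ℂ V]
    (X : Module.End ℂ (⨂[ℂ] _ : Fin d, V))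
    (hX : ∀ σ, X * permOp V d σ = permOp V d σ * X) :
    X ∈ Algebra.adjoin ℂ {S | ∃ a : Module.End ℂ V, S = diagOp V d a} := by
  set B := Algebra.adjoin ℂ {S | ∃ a : Module.End ℂ V, S = diagOp V d a}
  have hinv (σ : Equiv.Perm (Fin d)) : permOp V d σ * permOp V d σ⁻¹ = 1 := by
    change permRep V d σ * permRep V d σ⁻¹ = 1
    rw [← map_mul, mul_inv_cancel, map_one]
  have havg (Y : Module.End ℂ (⨂[ℂ] _ : Fin d, V)) :
      ∑ σ, permOp V d σ * Y * permOp V d σ⁻¹ ∈ B := by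
    have hY : Y ∈ Submodule.span ℂ (Set.range fun f : Fin d → Module.End ℂ V =>
      (PiTensorProduct.map f : Module.End ℂ (⨂[ℂ] _ : Fin d, V))) := by
      rw [span_range_piTensorProduct_map]; trivial
    induction hY using Submodule.span_induction with
    | mem x hx =>
      obtain ⟨f, rfl⟩ := hx
      convert symmMap_mem_adjoin_diagOp f using 1
      rw [symmMap, ← Equiv.sum_comp (Equiv.inv _)]
      refine Finset.sum_congr rfl fun σ _ => ?_
      rw [permOp_mul_map, mul_assoc, hinv, mul_one]
      rfl
    | zero => simp
    | add x y _ _ hx hy =>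
      simp only [mul_add, add_mul, Finset.sum_add_distrib]
      exact B.add_mem hx hy
    | smul c x _ hx =>
      simp only [mul_smul_comm, smul_mul_assoc, ← Finset.smul_sum]
      exact B.smul_mem hx c
  have h := havg X
  simp only [← hX, mul_assoc, hinv, mul_one, Finset.sum_const] at h
  rw [← Nat.cast_smul_eq_nsmul ℂ] at h
  exact (B.toSubmodule.smul_mem_iff (Nat.cast_ne_zero.2 (Finset.card_ne_zero_of_mem (Finset.mem_univ 1)))).1 h

end

/-- Schur-Weyl duality, second half: the centralizer of the unital subalgebra `B` generated by
the diagonal operators `Σ_i a^{(i)}` (`a ∈ End(V)`) on `V^{⊗d}` is the subalgebra `A` spanned by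
the permutation operators of `S_d`. -/
theorem schur_weyl_centralizer_of_gl
    (V : Type) [AddCommGroup V] [Module ℂ V] [FiniteDimensional ℂ V] (d : ℕ) :
    {T : Module.End ℂ (⨂[ℂ] _ : Fin d, V) |
        ∀ S ∈ (Algebra.adjoin ℂ {S | ∃ a : Module.End ℂ V, S = diagOp V d a} : Set _),
          T * S = S * T}
      = (Submodule.span ℂ {S | ∃ σ : Equiv.Perm (Fin d), S = permOp V d σ} : Set _) := by
  refine Set.Subset.antisymm (fun T hT => ?_) fun T hT => ?_
  · have : NeZero (Fintype.card (Equiv.Perm (Fin d)) : ℂ) :=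
      ⟨Nat.cast_ne_zero.2 Fintype.card_ne_zero⟩
    have h := mem_span_range_of_commute_intertwiners (permRep V d) T fun X hX =>
      hT X (mem_adjoin_diagOp_of_commute_permOp X hX)
    refine Submodule.span_mono ?_ h
    rintro _ ⟨σ, rfl⟩
    exact ⟨σ, rfl⟩
  · let C := Subalgebra.centralizer ℂ {S | ∃ σ : Equiv.Perm (Fin d), S = permOp V d σ}
    have hle : Algebra.adjoin ℂ {S | ∃ a : Module.End ℂ V, S = diagOp V d a} ≤ C := by
      refine Algebra.adjoin_le ?_
      rintro _ ⟨a, rfl⟩ _ ⟨σ, rfl⟩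
      exact permOp_mul_diagOp σ a
    intro S hS
    refine Submodule.span_induction (fun x hx => hle hS x hx) (by simp)
      (fun x y _ _ hx hy => by rw [add_mul, mul_add, hx, hy])
      (fun c x _ hx => by rw [smul_mul_assoc, mul_smul_comm, hx]) hT
end
end

section
/- Let ν ∈ ℂ and let λ, λ' be partitions with λ ∼ν λ' and λ ≠ λ'. Then ν is a nonnegative integer n, and there exists a unique partition κ such that κ ∼n λ and |κ| + κ_1 ≤ n. -/
/-- A partition (Young diagram): a weakly decreasing function `λ : {1,2,…} → ℕ` with
`λ_i = 0` for all sufficiently large `i`. -/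
structure NPartition where
  /-- the entries `λ_1 ≥ λ_2 ≥ ⋯` of the partition -/
  toFun : ℕ+ → ℕ
  antitone' : ∀ ⦃i j : ℕ+⦄, i ≤ j → toFun j ≤ toFun i
  eventually_zero' : ∃ N : ℕ+, ∀ i : ℕ+, N ≤ i → toFun i = 0

/-- `|λ| = Σ_{i ≥ 1} λ_i`. -/
noncomputable def NPartition.size (l : NPartition) : ℕ := ∑ᶠ i : ℕ+, l.toFun i

/-- The sequence `μ_λ(ν)` with `μ_λ(ν)_0 = ν − |λ|` and `μ_λ(ν)_i = λ_i − i` for `i ≥ 1`. -/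
noncomputable def muSeq (ν : ℂ) (l : NPartition) : ℕ → ℂ := fun i =>
  if h : i = 0 then ν - (l.size : ℂ)
  else (l.toFun ⟨i, Nat.pos_of_ne_zero h⟩ : ℂ) - (i : ℂ)

/-- `λ ∼ν λ'`: there is a bijection `f : ℕ → ℕ` with `μ_λ(ν)_i = μ_{λ'}(ν)_{f(i)}` for all
`i ∈ ℕ`. -/
def nuEquiv (ν : ℂ) (l l' : NPartition) : Prop :=
  ∃ f : ℕ ≃ ℕ, ∀ i : ℕ, muSeq ν l i = muSeq ν l' (f i)

@[ext]
theorem NPartition.ext {l l' : NPartition} (h : l.toFun = l'.toFun) : l = l' := by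
  cases l; cases l'; congr

theorem NPartition.finite_support (l : NPartition) : (Function.support l.toFun).Finite := by
  obtain ⟨N, hN⟩ := l.eventually_zero'
  refine (Set.finite_Iic N).subset fun i hi => ?_
  by_contra hlt
  exact hi (hN i (le_of_lt (not_le.mp hlt)))

/-- Partitions that differ in at most one row have sizes that differ by the difference of
that row. -/
theorem NPartition.size_add_of_eq_off {l l' : NPartition} {k : ℕ+}
    (h : ∀ i, i ≠ k → l'.toFun i = l.toFun i) :
    l'.size + l.toFun k = l.size + l'.toFun k := by
  classical
  set s : Finset ℕ+ :=
    insert k (l.finite_support.toFinset ∪ l'.finite_support.toFinset) with hs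
  have size_eq : l.size = ∑ i ∈ s, l.toFun i :=
    finsum_eq_sum_of_support_subset _ fun i hi => by simp_all
  have size_eq' : l'.size = ∑ i ∈ s, l'.toFun i :=
    finsum_eq_sum_of_support_subset _ fun i hi => by simp_all
  have hk : k ∈ s := by simp [hs]
  rw [size_eq, size_eq', ← Finset.add_sum_erase s _ hk, ← Finset.add_sum_erase s l.toFun hk,
    Finset.sum_congr rfl fun i hi => h i (Finset.ne_of_mem_erase hi)]
  ring

theorem muSeq_zero (ν : ℂ) (l : NPartition) : muSeq ν l 0 = ν - l.size := by
  simp [muSeq]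

theorem muSeq_pnat (ν : ℂ) (l : NPartition) (k : ℕ+) :
    muSeq ν l k = (l.toFun k : ℂ) - ((k : ℕ) : ℂ) :=
  dif_neg k.ne_zero

theorem exists_pnat_of_ne_zero {n : ℕ} (h : n ≠ 0) : ∃ k : ℕ+, (k : ℕ) = n :=
  ⟨⟨n, Nat.pos_of_ne_zero h⟩, rfl⟩

theorem muSeq_re_lt (ν : ℂ) (l : NPartition) {i j : ℕ} (hi : i ≠ 0) (hij : i < j) :
    (muSeq ν l j).re < (muSeq ν l i).re := by
  obtain ⟨a, rfl⟩ := exists_pnat_of_ne_zero hi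
  obtain ⟨b, rfl⟩ := exists_pnat_of_ne_zero (show j ≠ 0 by omega)
  have hab : l.toFun b ≤ l.toFun a := l.antitone' (le_of_lt (by exact_mod_cast hij))
  have hab' : (l.toFun b : ℝ) ≤ l.toFun a := by exact_mod_cast hab
  have hij' : ((a : ℕ) : ℝ) < ((b : ℕ) : ℝ) := by exact_mod_cast hij
  simp only [muSeq_pnat, Complex.sub_re, Complex.natCast_re]
  linarith

theorem nuEquiv.refl (ν : ℂ) (l : NPartition) : nuEquiv ν l l := ⟨Equiv.refl _, fun _ => rfl⟩

theorem nuEquiv.symm {ν : ℂ} {l l' : NPartition} (h : nuEquiv ν l l') : nuEquiv ν l' l := by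
  obtain ⟨f, hf⟩ := h
  exact ⟨f.symm, fun i => by rw [hf, f.apply_symm_apply]⟩

theorem nuEquiv.trans {ν : ℂ} {l₁ l₂ l₃ : NPartition} (h : nuEquiv ν l₁ l₂)
    (h' : nuEquiv ν l₂ l₃) : nuEquiv ν l₁ l₃ := by
  obtain ⟨f, hf⟩ := h
  obtain ⟨g, hg⟩ := h'
  exact ⟨f.trans g, fun i => by rw [hf, hg]; rfl⟩

/-- Equivalent partitions whose sequences have the same zeroth term are equal. -/
theorem nuEquiv.eq_of_muSeq_zero_eq {ν : ℂ} {l l' : NPartition} (h : nuEquiv ν l l')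
    (h0 : muSeq ν l 0 = muSeq ν l' 0) : l = l' := by
  obtain ⟨f, hf⟩ := h
  obtain ⟨g, hg, hg0⟩ : ∃ g : ℕ ≃ ℕ, (∀ i, muSeq ν l i = muSeq ν l' (g i)) ∧ g 0 = 0 := by
    refine ⟨f.trans (Equiv.swap 0 (f 0)), fun i => ?_, by simp⟩
    rw [hf, Equiv.trans_apply]
    have h0' : muSeq ν l' (f 0) = muSeq ν l' 0 := by rw [← hf, h0]
    rcases eq_or_ne (f i) 0 with hi | hi
    · rw [hi, Equiv.swap_apply_left, h0']
    · by_cases hi' : f i = f 0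
      · rw [hi', Equiv.swap_apply_right, h0']
      · rw [Equiv.swap_apply_of_ne_of_ne hi hi']
  have g_ne {i : ℕ} (hi : i ≠ 0) : g i ≠ 0 := fun h => hi (g.injective (h.trans hg0.symm))
  have g_mono : StrictMono g := by
    intro i j hij
    rcases eq_or_ne i 0 with rfl | hi
    · rw [hg0]
      exact Nat.pos_of_ne_zero (g_ne (by omega))
    · by_contra hle
      have hne : g j ≠ g i := fun h => by have := g.injective h; omega
      have h1 := muSeq_re_lt ν l hi hij
      have h2 := muSeq_re_lt ν l' (g_ne (show j ≠ 0 by omega))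
        (show g j < g i by omega)
      rw [hg, hg i] at h1
      exact lt_asymm h1 h2
  have g_id : ∀ i, g i = i := fun i =>
    DFunLike.congr_fun (Subsingleton.elim (g_mono.orderIsoOfSurjective g g.surjective)
      (OrderIso.refl ℕ)) i
  ext k
  have hk := hg k
  rw [g_id, muSeq_pnat, muSeq_pnat, sub_left_inj] at hk
  exact_mod_cast hk

/-- If the sequence of `l` has distinct terms and its zeroth term is not the largest one, then
exchanging it with the smallest larger term gives an equivalent, smaller partition. -/
theorem exists_nuEquiv_size_lt {N : ℤ} {l : NPartition}
    (hinj : Function.Injective (muSeq (N : ℂ) l)) (hl : N < l.size + l.toFun 1) :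
    ∃ l', nuEquiv (N : ℂ) l' l ∧ l'.size < l.size := by
  set c : ℤ := N - l.size with hc
  have c_ne (i : ℕ+) : (l.toFun i : ℤ) - (i : ℕ) ≠ c := by
    intro hi
    have h0 : muSeq (N : ℂ) l i = muSeq (N : ℂ) l 0 := by
      rw [muSeq_zero, muSeq_pnat]
      exact_mod_cast hi
    exact i.ne_zero (hinj h0)
  obtain ⟨k, hk, hk'⟩ : ∃ k : ℕ+, c < (l.toFun k : ℤ) - (k : ℕ) ∧
      (l.toFun (k + 1) : ℤ) - ((k + 1 : ℕ+) : ℕ) < c := by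
    by_contra! hstep
    have hall (i : ℕ+) : c < (l.toFun i : ℤ) - (i : ℕ) := by
      induction i using PNat.recOn with
      | one =>
        have := c_ne 1
        simp only [PNat.one_coe] at this ⊢
        omega
      | succ i ih => exact lt_of_le_of_ne (hstep i ih) (c_ne _).symm
    obtain ⟨M, hM⟩ := l.eventually_zero'
    have h1 := hall (M + c.natAbs.succPNat)
    rw [hM _ (PNat.lt_add_right M _).le, PNat.add_coe, Nat.succPNat_coe] at h1
    omega
  rw [PNat.add_coe, PNat.one_coe] at hk'
  obtain ⟨m, hm⟩ : ∃ m : ℕ, (m : ℤ) = c + (k : ℕ) := ⟨(c + (k : ℕ)).toNat, by omega⟩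
  obtain ⟨l', hlk, hl'⟩ : ∃ l' : NPartition, l'.toFun k = m ∧
      ∀ i, i ≠ k → l'.toFun i = l.toFun i := by
    refine ⟨⟨Function.update l.toFun k m, fun i j hij => ?_, ?_⟩, by simp,
      fun i hi => by simp [hi]⟩
    · have hle := l.antitone' hij
      simp only [Function.update_apply]
      split_ifs with hj hi hi
      · rfl
      · subst hj
        omega
      · subst hi
        have := l.antitone' (PNat.add_one_le_iff.mpr (lt_of_le_of_ne hij (Ne.symm hj)))
        omega
      · exact hle
    · obtain ⟨M, hM⟩ := l.eventually_zero'
      refine ⟨M + k, fun i hi => ?_⟩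
      have hki : k < i := lt_of_lt_of_le (PNat.lt_add_left k M) hi
      rw [Function.update_of_ne hki.ne']
      exact hM i ((PNat.lt_add_right M k).le.trans hi)
  have hsize := NPartition.size_add_of_eq_off hl'
  refine ⟨l', ⟨Equiv.swap 0 (k : ℕ), fun i => ?_⟩, by omega⟩
  rcases eq_or_ne i 0 with rfl | hi
  · rw [Equiv.swap_apply_left, muSeq_zero, muSeq_pnat]
    have : N - (l'.size : ℤ) = l.toFun k - (k : ℕ) := by omega
    exact_mod_cast this
  · obtain ⟨j, rfl⟩ := exists_pnat_of_ne_zero hi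
    rcases eq_or_ne j k with rfl | hj
    · rw [Equiv.swap_apply_right, muSeq_zero, muSeq_pnat]
      have : (l'.toFun j : ℤ) - (j : ℕ) = N - l.size := by omega
      exact_mod_cast this
    · rw [Equiv.swap_apply_of_ne_of_ne hi (fun h => hj (PNat.eq h)), muSeq_pnat, muSeq_pnat,
        hl' j hj]

theorem exists_nuEquiv_size_add_le {N : ℤ} {l : NPartition}
    (hinj : Function.Injective (muSeq (N : ℂ) l)) :
    ∃ κ, nuEquiv (N : ℂ) κ l ∧ (κ.size + κ.toFun 1 : ℤ) ≤ N := by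
  induction hs : l.size using Nat.strong_induction_on generalizing l with
  | _ s ih =>
    rcases le_or_gt (l.size + l.toFun 1 : ℤ) N with hle | hlt
    · exact ⟨l, nuEquiv.refl _ l, hle⟩
    · obtain ⟨l', hl', hlt'⟩ := exists_nuEquiv_size_lt hinj hlt
      obtain ⟨κ, hκ, hle⟩ := ih l'.size (hs ▸ hlt') (by
        obtain ⟨f, hf⟩ := hl'
        rw [show muSeq (N : ℂ) l' = muSeq (N : ℂ) l ∘ f from funext hf]
        exact hinj.comp f.injective) rfl
      exact ⟨κ, hκ.trans hl', hle⟩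

theorem muSeq_re_le_zero {n : ℕ} {κ : NPartition} (h : κ.size + κ.toFun 1 ≤ n) (i : ℕ) :
    (muSeq (n : ℂ) κ i).re ≤ (muSeq (n : ℂ) κ 0).re := by
  rcases eq_or_ne i 0 with rfl | hi
  · rfl
  · obtain ⟨k, rfl⟩ := exists_pnat_of_ne_zero hi
    have h1 : κ.toFun k ≤ κ.toFun 1 := κ.antitone' one_le
    have h2 : (κ.size : ℝ) + κ.toFun k ≤ n := by exact_mod_cast (by omega)
    have h3 : (0 : ℝ) ≤ (k : ℕ) := Nat.cast_nonneg _
    simp only [muSeq_pnat, muSeq_zero, Complex.sub_re, Complex.natCast_re]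
    linarith

theorem nuEquiv.eq_of_size_add_le {n : ℕ} {κ κ' : NPartition} (h : nuEquiv (n : ℂ) κ κ')
    (hκ : κ.size + κ.toFun 1 ≤ n) (hκ' : κ'.size + κ'.toFun 1 ≤ n) : κ = κ' := by
  refine h.eq_of_muSeq_zero_eq ?_
  obtain ⟨f, hf⟩ := h
  have h1 := muSeq_re_le_zero hκ' (f 0)
  have h2 := muSeq_re_le_zero hκ (f.symm 0)
  rw [← hf] at h1
  rw [hf, f.apply_symm_apply] at h2
  refine Complex.ext (le_antisymm h1 h2) ?_
  simp [muSeq_zero]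

/-- If `λ ∼ν λ'` with `λ ≠ λ'` then `ν` is a nonnegative integer `n`, and there is a unique
partition `κ` with `κ ∼n λ` and `|κ| + κ_1 ≤ n`. -/
theorem exists_nat_and_unique_minimal_of_nontrivial_class (ν : ℂ)
    (l l' : NPartition) (h : nuEquiv ν l l') (hne : l ≠ l') :
    ∃ n : ℕ, ν = (n : ℂ) ∧
      ∃! κ : NPartition, nuEquiv ν κ l ∧ κ.size + κ.toFun 1 ≤ n := by
  have h0 : muSeq ν l 0 ≠ muSeq ν l' 0 := fun h0 => hne (h.eq_of_muSeq_zero_eq h0)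
  obtain ⟨f, hf⟩ := h
  have hf0 : f 0 ≠ 0 := fun h => h0 (by rw [hf, h])
  obtain ⟨N, rfl⟩ : ∃ N : ℤ, ν = N := by
    obtain ⟨k, hk⟩ := exists_pnat_of_ne_zero hf0
    have hν := hf 0
    rw [← hk, muSeq_zero, muSeq_pnat] at hν
    refine ⟨l'.toFun k - (k : ℕ) + l.size, ?_⟩
    push_cast
    rw [← hν]
    ring
  have hinj : Function.Injective (muSeq (N : ℂ) l) := by
    refine Function.Injective.of_lt_imp_ne fun i j hij heq => ?_
    rcases eq_or_ne i 0 with rfl | hi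
    · have hfj : f j ≠ 0 := fun h => h0 (by rw [heq, hf, h])
      rw [hf, hf j] at heq
      rcases lt_trichotomy (f 0) (f j) with hlt | he | hlt
      · exact (muSeq_re_lt (N : ℂ) l' hf0 hlt).ne (by rw [heq])
      · exact hij.ne (f.injective he)
      · exact (muSeq_re_lt (N : ℂ) l' hfj hlt).ne (by rw [heq])
    · exact (muSeq_re_lt (N : ℂ) l hi hij).ne (by rw [heq])
  obtain ⟨κ, hκ, hle⟩ := exists_nuEquiv_size_add_le hinj
  lift N to ℕ using by omega
  rw [Int.cast_natCast] at *
  refine ⟨N, rfl, κ, ⟨hκ, by omega⟩, fun κ' ⟨hκ', hle'⟩ => ?_⟩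
  exact (hκ'.trans hκ.symm).eq_of_size_add_le hle' (by omega)
end
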